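/- arXiv:1311.0131 — 3 statements merged into one kernel-verified Lean document; each statement's English description precedes it below -/
import Mathlib

section
/- Let x, y ∈ ℝ^4 be linearly independent and u, v ∈ ℝ^4 be linearly independent. Then span{x,y} = span{u,v} if and only if there exists a nonzero λ ∈ ℝ with p(u,v) = λ • p(x,y). (Hence the Klein mapping is well defined and injective on lines of P^3(ℝ).) -/
/-!
When `x ∧ y ≠ 0`, a vector `z` lies in `span {x, y}` if and only if `z ∧ x ∧ y = 0`. The coordinates
of this trivector involve `x` and `y` only through their `2 × 2` minors, linearly, so the minors,
even up to a nonzero factor, determine the span. Conversely, replacing `x, y` by two vectors of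
their span multiplies every minor by the determinant of the coefficients.
-/

/-- The Plücker coordinate vector `(p01, p02, p03, p23, p31, p12)` of the
pair `x, y ∈ ℝ⁴`. -/
def pluck (x y : Fin 4 → ℝ) : Fin 6 → ℝ :=
  ![x 0 * y 1 - x 1 * y 0, x 0 * y 2 - x 2 * y 0, x 0 * y 3 - x 3 * y 0,
    x 2 * y 3 - x 3 * y 2, x 3 * y 1 - x 1 * y 3, x 1 * y 2 - x 2 * y 1]

section PluckerMatrix

variable {R ι : Type*} [CommRing R]

/-- The (primal) Plücker matrix of the pair `x, y`, with entries the `2 × 2` minors `p_ij`. It holds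
the coordinates of `x ∧ y` for an arbitrary index type; for `Fin 4`, the vector `pluck x y` lists
its entries above the diagonal, up to the sign of `p_31 = -p_13`. -/
def pluckerMatrix (x y : ι → R) : Matrix ι ι R :=
  Matrix.of fun i j ↦ x i * y j - x j * y i

lemma pluckerMatrix_apply (x y : ι → R) (i j : ι) :
    pluckerMatrix x y i j = x i * y j - x j * y i :=
  rfl

lemma pluckerMatrix_smul_add_smul (x y : ι → R) (a b c d : R) :
    pluckerMatrix (a • x + b • y) (c • x + d • y) = (a * d - b * c) • pluckerMatrix x y := by
  ext i j
  simp only [pluckerMatrix_apply, Matrix.smul_apply, Pi.add_apply, Pi.smul_apply, smul_eq_mul]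
  ring

lemma exists_pluckerMatrix_eq_smul_of_span_pair_le {x y u v : ι → R}
    (h : Submodule.span R {u, v} ≤ Submodule.span R {x, y}) :
    ∃ c : R, pluckerMatrix u v = c • pluckerMatrix x y := by
  have hu : u ∈ Submodule.span R {x, y} := h (Submodule.mem_span_of_mem (by simp))
  have hv : v ∈ Submodule.span R {x, y} := h (Submodule.mem_span_of_mem (by simp))
  obtain ⟨a, b, rfl⟩ := Submodule.mem_span_pair.mp hu
  obtain ⟨c, d, rfl⟩ := Submodule.mem_span_pair.mp hv
  exact ⟨_, pluckerMatrix_smul_add_smul x y a b c d⟩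

lemma pluckerMatrix_ne_zero_of_linearIndependent [Nontrivial R] {x y : ι → R}
    (hxy : LinearIndependent R ![x, y]) : pluckerMatrix x y ≠ 0 := by
  intro hP
  have hx : x = 0 := by
    funext j
    have relation : y j • x + (-x j) • y = 0 := by
      funext i
      have hij : x i * y j - x j * y i = 0 := congrFun₂ hP i j
      simp only [Pi.add_apply, Pi.smul_apply, smul_eq_mul, Pi.zero_apply]
      linear_combination hij
    exact neg_eq_zero.mp (LinearIndependent.pair_iff.mp hxy _ _ relation).2
  exact hxy.ne_zero 0 hx

end PluckerMatrix

section Field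

variable {K ι : Type*} [Field K] {x y u v : ι → K}

lemma mem_span_pair_iff_pluckerMatrix (hP : pluckerMatrix x y ≠ 0) (z : ι → K) :
    z ∈ Submodule.span K {x, y} ↔
      ∀ i j k, z i * pluckerMatrix x y j k + z j * pluckerMatrix x y k i
        + z k * pluckerMatrix x y i j = 0 := by
  constructor
  · intro hz i j k
    obtain ⟨a, b, rfl⟩ := Submodule.mem_span_pair.mp hz
    simp only [pluckerMatrix_apply, Pi.add_apply, Pi.smul_apply, smul_eq_mul]
    ring
  · intro hz
    obtain ⟨i, j, hij⟩ : ∃ i j, pluckerMatrix x y i j ≠ 0 := by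
      by_contra! h
      exact hP (Matrix.ext h)
    -- Cramer's rule for the coordinates `i` and `j`.
    refine Submodule.mem_span_pair.mpr
      ⟨pluckerMatrix z y i j / pluckerMatrix x y i j,
        pluckerMatrix x z i j / pluckerMatrix x y i j, ?_⟩
    funext k
    have hk := hz i j k
    simp only [Pi.add_apply, Pi.smul_apply, smul_eq_mul]
    rw [div_mul_eq_mul_div, div_mul_eq_mul_div, ← add_div, div_eq_iff hij]
    simp only [pluckerMatrix_apply] at hk ⊢
    linear_combination -hk

lemma span_pair_eq_of_pluckerMatrix_eq_smul {c : K} (hP : pluckerMatrix u v ≠ 0)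
    (h : pluckerMatrix u v = c • pluckerMatrix x y) :
    Submodule.span K {x, y} = Submodule.span K {u, v} := by
  obtain ⟨hc, hxy⟩ : c ≠ 0 ∧ pluckerMatrix x y ≠ 0 := smul_ne_zero_iff.mp (h ▸ hP)
  ext z
  rw [mem_span_pair_iff_pluckerMatrix hxy, mem_span_pair_iff_pluckerMatrix hP, h]
  simp only [Matrix.smul_apply, smul_eq_mul, mul_left_comm _ c, ← mul_add, mul_eq_zero, hc,
    false_or]

theorem span_eq_iff_pluck_proportional_general (hxy : LinearIndependent K ![x, y]) :
    Submodule.span K {x, y} = Submodule.span K {u, v} ↔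
      ∃ c : K, c ≠ 0 ∧ pluckerMatrix u v = c • pluckerMatrix x y := by
  have hP := pluckerMatrix_ne_zero_of_linearIndependent hxy
  constructor
  · intro hspan
    obtain ⟨c, hc⟩ := exists_pluckerMatrix_eq_smul_of_span_pair_le hspan.ge
    obtain ⟨d, hd⟩ := exists_pluckerMatrix_eq_smul_of_span_pair_le hspan.le
    refine ⟨c, ?_, hc⟩
    rintro rfl
    exact hP (by rw [hd, hc, zero_smul, smul_zero])
  · rintro ⟨c, hc, h⟩
    exact span_pair_eq_of_pluckerMatrix_eq_smul (h ▸ smul_ne_zero hc hP) h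

end Field

lemma pluckerMatrix_eq_of_pluck (x y : Fin 4 → ℝ) :
    pluckerMatrix x y =
      !![0, pluck x y 0, pluck x y 1, pluck x y 2;
        -pluck x y 0, 0, pluck x y 5, -pluck x y 4;
        -pluck x y 1, -pluck x y 5, 0, pluck x y 3;
        -pluck x y 2, pluck x y 4, -pluck x y 3, 0] := by
  ext i j
  fin_cases i <;> fin_cases j <;> simp [pluckerMatrix_apply, pluck]

lemma pluck_eq_smul_iff_pluckerMatrix_eq_smul {x y u v : Fin 4 → ℝ} {c : ℝ} :
    pluck u v = c • pluck x y ↔ pluckerMatrix u v = c • pluckerMatrix x y := by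
  constructor
  · intro h
    rw [pluckerMatrix_eq_of_pluck u v, pluckerMatrix_eq_of_pluck x y, h]
    ext i j
    fin_cases i <;> fin_cases j <;> simp
  · intro h
    have minor_eq (i j : Fin 4) : u i * v j - u j * v i = c * (x i * y j - x j * y i) :=
      congrFun₂ h i j
    simp only [pluck, minor_eq, Matrix.smul_cons, smul_eq_mul, Matrix.smul_empty]

theorem span_eq_iff_pluck_proportional (x y u v : Fin 4 → ℝ)
    (hxy : LinearIndependent ℝ ![x, y]) (huv : LinearIndependent ℝ ![u, v]) :
    Submodule.span ℝ {x, y} = Submodule.span ℝ {u, v} ↔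
      ∃ lam : ℝ, lam ≠ 0 ∧ pluck u v = lam • pluck x y := by
  simp only [pluck_eq_smul_iff_pluckerMatrix_eq_smul]
  exact span_eq_iff_pluck_proportional_general hxy
end

section
/- Let x, y ∈ ℝ^4 be linearly independent and u, v ∈ ℝ^4 be linearly independent. The two lines span{x,y} and span{u,v} of P^3(ℝ) intersect (i.e., span{x,y} ∩ span{u,v} ≠ {0}) if and only if B(p(x,y), p(u,v)) = 0, i.e., if and only if their Plücker coordinate vectors are conjugate with respect to Klein's quadric. -/
/-- The polar bilinear form of the Klein quadratic form. -/
def kleinBilin (p q : Fin 6 → ℝ) : ℝ :=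
  p 0 * q 3 + p 1 * q 4 + p 2 * q 5 + p 3 * q 0 + p 4 * q 1 + p 5 * q 2

/-!
Stack the four vectors as the rows of a `4 × 4` matrix. Laplace expansion of its determinant along
the first two rows pairs each `2 × 2` minor of `x, y` with the complementary signed minor of `u, v`,
and this sum is the polar form of Klein's quadric at the two Plücker vectors. As each pair is
independent, the rows are dependent exactly when the two spans share a nonzero vector.
-/

theorem linearIndependent_finAppend_iff {R M : Type*} [Ring R] [AddCommGroup M] [Module R M]
    {m n : ℕ} {v : Fin m → M} {w : Fin n → M} :
    LinearIndependent R (Fin.append v w) ↔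
      LinearIndependent R v ∧ LinearIndependent R w ∧
        Disjoint (Submodule.span R (Set.range v)) (Submodule.span R (Set.range w)) := by
  rw [← linearIndependent_equiv finSumFinEquiv, linearIndependent_sum]
  simp [Function.comp_def]

theorem disjoint_span_pair_iff_linearIndependent {R M : Type*} [Ring R] [AddCommGroup M]
    [Module R M] {x y u v : M} (hxy : LinearIndependent R ![x, y])
    (huv : LinearIndependent R ![u, v]) :
    Disjoint (Submodule.span R {x, y}) (Submodule.span R {u, v}) ↔
      LinearIndependent R ![x, y, u, v] := by
  have happend : ![x, y, u, v] = Fin.append ![x, y] ![u, v] := List.ofFn_injective rfl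
  rw [happend, linearIndependent_finAppend_iff, Matrix.range_cons_cons_empty,
    Matrix.range_cons_cons_empty]
  exact ⟨fun hdisj ↦ ⟨hxy, huv, hdisj⟩, fun h ↦ h.2.2⟩

theorem linearIndependent_row_iff_det_ne_zero {K n : Type*} [Field K] [Fintype n] [DecidableEq n]
    {A : Matrix n n K} : LinearIndependent K A.row ↔ A.det ≠ 0 := by
  rw [Matrix.linearIndependent_rows_iff_isUnit, Matrix.isUnit_iff_isUnit_det, isUnit_iff_ne_zero]

-- The order and signs of the factors match `kleinBilin` and `pluck`, so that
-- `kleinBilin_pluck_eq_det` is a definitional instance.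
theorem det_fin_four_laplace {R : Type*} [CommRing R] (A : Matrix (Fin 4) (Fin 4) R) :
    A.det =
      (A 0 0 * A 1 1 - A 0 1 * A 1 0) * (A 2 2 * A 3 3 - A 2 3 * A 3 2) +
      (A 0 0 * A 1 2 - A 0 2 * A 1 0) * (A 2 3 * A 3 1 - A 2 1 * A 3 3) +
      (A 0 0 * A 1 3 - A 0 3 * A 1 0) * (A 2 1 * A 3 2 - A 2 2 * A 3 1) +
      (A 0 2 * A 1 3 - A 0 3 * A 1 2) * (A 2 0 * A 3 1 - A 2 1 * A 3 0) +
      (A 0 3 * A 1 1 - A 0 1 * A 1 3) * (A 2 0 * A 3 2 - A 2 2 * A 3 0) +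
      (A 0 1 * A 1 2 - A 0 2 * A 1 1) * (A 2 0 * A 3 3 - A 2 3 * A 3 0) := by
  rw [Matrix.det_succ_row_zero, Fin.sum_univ_four]
  simp only [Matrix.det_fin_three, Matrix.submatrix_apply, Fin.succAbove, Fin.reduceSucc,
    Fin.reduceCastSucc, Fin.reduceLT, ↓reduceIte, Fin.isValue, Fin.coe_ofNat_eq_mod]
  ring

theorem kleinBilin_pluck_eq_det (x y u v : Fin 4 → ℝ) :
    kleinBilin (pluck x y) (pluck u v) = (Matrix.of ![x, y, u, v]).det :=
  (det_fin_four_laplace (Matrix.of ![x, y, u, v])).symm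

theorem lines_intersect_iff_conjugate (x y u v : Fin 4 → ℝ)
    (hxy : LinearIndependent ℝ ![x, y]) (huv : LinearIndependent ℝ ![u, v]) :
    Submodule.span ℝ {x, y} ⊓ Submodule.span ℝ {u, v} ≠ ⊥ ↔
      kleinBilin (pluck x y) (pluck u v) = 0 := by
  have hdisj : Disjoint (Submodule.span ℝ {x, y}) (Submodule.span ℝ {u, v}) ↔
      (Matrix.of ![x, y, u, v]).det ≠ 0 :=
    (disjoint_span_pair_iff_linearIndependent hxy huv).trans linearIndependent_row_iff_det_ne_zero
  rw [ne_eq, ← disjoint_iff, hdisj, not_ne_iff, kleinBilin_pluck_eq_det]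
end

section
/- Every regular projective collineation of P^3(ℝ) is the product of at most six null polarities: for every A ∈ GL(4,ℝ) with det A > 0 there exist an even number k with 2 ≤ k ≤ 6, invertible skew-symmetric real 4×4 matrices S₁, …, S_k, and a nonzero λ ∈ ℝ, such that A = λ • (S₁ * S₂ * ⋯ * S_k). -/
/-!
Over any commutative ring, a block diagonal matrix `diag(X, G * Xᵀ * G⁻¹)` is a product of two null
polarities with antidiagonal blocks. Given one invertible skew-symmetric `n × n` matrix, so are the
block triangular matrices with diagonal `(1, a • 1)`, for units `a` and `1 - a`, since they are
conjugate to their block diagonal. By the block LDU decomposition, a matrix with blocks `A, B, C, D`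
is thus a product of six null polarities as soon as the Schur complement of `A` is, up to a suitable
scalar, similar to `Aᵀ`.

In dimension four, with square determinant, it remains to choose a basis that achieves this. If the
minimal polynomial has degree at least three, we make both `A` and its Schur complement traceless
and non-scalar, so that the determinant decides on similarity. If the degree is at most two, the
map is a scalar, or the space is a sum of two isomorphic invariant planes, or the map differs from a
scalar by a map of rank one. In the first two cases the map is already of the form `diag(X, X)`, and
in the third `A` and its Schur complement can be made diagonal and equal.
-/

open Matrix

section NullPolarities

open Module
open scoped Pointwise

variable {m n R : Type*} [Fintype m] [Fintype n] [DecidableEq m] [DecidableEq n] [CommRing R]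

variable (n R) in
/-- The invertible skew-symmetric matrices, which represent null polarities; the products of `k` of
them form the pointwise power `nullPolarities n R ^ k`. In characteristic two the diagonal is not
required to vanish. -/
def nullPolarities : Set (Matrix n n R) :=
  {S | IsUnit S ∧ Sᵀ = -S}

theorem smul_mem_nullPolarities {c : R} (hc : IsUnit c) {S : Matrix n n R}
    (hS : S ∈ nullPolarities n R) : c • S ∈ nullPolarities n R :=
  ⟨hS.1.smul hc.unit, by rw [transpose_smul, hS.2, smul_neg]⟩

theorem inv_mem_nullPolarities {S : Matrix n n R} (hS : S ∈ nullPolarities n R) :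
    S⁻¹ ∈ nullPolarities n R := by
  have hneg : -S * -S⁻¹ = 1 := by
    rw [neg_mul_neg, mul_nonsing_inv _ ((isUnit_iff_isUnit_det S).1 hS.1)]
  exact ⟨isUnit_nonsing_inv_iff.2 hS.1, by
    rw [transpose_nonsing_inv, hS.2, inv_eq_right_inv hneg]⟩

theorem congr_mem_nullPolarities {P : Matrix m n R} {Q : Matrix n m R} (hPQ : P * Q = 1)
    (hQP : Q * P = 1) {S : Matrix n n R} (hS : S ∈ nullPolarities n R) :
    P * S * Pᵀ ∈ nullPolarities m R := by
  have hinv : P * S * Pᵀ * (Qᵀ * S⁻¹ * Q) = 1 := calc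
    _ = P * S * (Q * P)ᵀ * S⁻¹ * Q := by simp only [transpose_mul, Matrix.mul_assoc]
    _ = P * (S * S⁻¹) * Q := by rw [hQP, transpose_one, Matrix.mul_one, Matrix.mul_assoc P]
    _ = 1 := by
      rw [mul_nonsing_inv _ ((isUnit_iff_isUnit_det S).1 hS.1), Matrix.mul_one, hPQ]
  refine ⟨.of_mul_eq_one _ hinv, ?_⟩
  simp only [transpose_mul, transpose_transpose, hS.2, Matrix.mul_neg, Matrix.neg_mul,
    Matrix.mul_assoc]

theorem conj_mem_nullPolarities_sq {P : Matrix m n R} {Q : Matrix n m R} (hPQ : P * Q = 1)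
    (hQP : Q * P = 1) {A : Matrix n n R} (hA : A ∈ nullPolarities n R ^ 2) :
    P * A * Q ∈ nullPolarities m R ^ 2 := by
  rw [sq] at hA ⊢
  obtain ⟨S, hS, T, hT, rfl⟩ := hA
  have hPQt : Qᵀ * Pᵀ = 1 := by rw [← transpose_mul, hPQ, transpose_one]
  have hQPt : Pᵀ * Qᵀ = 1 := by rw [← transpose_mul, hQP, transpose_one]
  refine ⟨_, congr_mem_nullPolarities hPQ hQP hS, _, congr_mem_nullPolarities hPQt hQPt hT, ?_⟩
  calc P * S * Pᵀ * (Qᵀ * T * Qᵀᵀ) = P * S * (Pᵀ * Qᵀ) * T * Q := by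
        simp only [transpose_transpose, Matrix.mul_assoc]
    _ = P * (S * T) * Q := by rw [hQPt, Matrix.mul_one, Matrix.mul_assoc P]

theorem conj_mem_nullPolarities_pow {P : Matrix m n R} {Q : Matrix n m R} (hPQ : P * Q = 1)
    (hQP : Q * P = 1) (k : ℕ) {A : Matrix n n R} (hA : A ∈ nullPolarities n R ^ (2 * k)) :
    P * A * Q ∈ nullPolarities m R ^ (2 * k) := by
  induction k generalizing A with
  | zero => simp_all
  | succ k ih =>
    rw [mul_add_one, pow_add] at hA ⊢
    obtain ⟨X, hX, Y, hY, rfl⟩ := hA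
    refine ⟨_, ih hX, _, conj_mem_nullPolarities_sq hPQ hQP hY, ?_⟩
    calc P * X * Q * (P * Y * Q) = P * X * (Q * P) * Y * Q := by simp only [Matrix.mul_assoc]
      _ = P * (X * Y) * Q := by rw [hQP, Matrix.mul_one, Matrix.mul_assoc P]

theorem toMatrix_mem_nullPolarities_pow_of_basis {V : Type*} [AddCommGroup V] [Module R V]
    {f : End R V} {k : ℕ} (b : Basis n R V) (c : Basis m R V)
    (h : LinearMap.toMatrix b b f ∈ nullPolarities n R ^ (2 * k)) :
    LinearMap.toMatrix c c f ∈ nullPolarities m R ^ (2 * k) := by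
  rw [← basis_toMatrix_mul_linearMap_toMatrix_mul_basis_toMatrix c b c b]
  exact conj_mem_nullPolarities_pow (c.toMatrix_mul_toMatrix_flip b)
    (b.toMatrix_mul_toMatrix_flip c) k h

theorem transpose_mem_nullPolarities_sq {A : Matrix n n R} (hA : A ∈ nullPolarities n R ^ 2) :
    Aᵀ ∈ nullPolarities n R ^ 2 := by
  rw [sq] at hA ⊢
  obtain ⟨S, hS, T, hT, rfl⟩ := hA
  exact ⟨T, hT, S, hS, by simp [transpose_mul, hS.2, hT.2]⟩

end NullPolarities

section Blocks

open scoped Pointwise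

variable {m n R : Type*} [Fintype m] [Fintype n] [DecidableEq m] [DecidableEq n] [CommRing R]

theorem fromBlocks_diagonal_mem_nullPolarities {S : Matrix m m R} {T : Matrix n n R}
    (hS : S ∈ nullPolarities m R) (hT : T ∈ nullPolarities n R) :
    fromBlocks S 0 0 T ∈ nullPolarities (m ⊕ n) R :=
  ⟨isUnit_fromBlocks_zero₁₂.2 ⟨hS.1, hT.1⟩, by
    simp [fromBlocks_transpose, fromBlocks_neg, hS.2, hT.2]⟩

theorem fromBlocks_antidiagonal_mem_nullPolarities {H : Matrix n n R} (hH : IsUnit H) :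
    fromBlocks 0 H (-Hᵀ) 0 ∈ nullPolarities (n ⊕ n) R := by
  have hinv : fromBlocks 0 H (-Hᵀ) 0 * fromBlocks 0 (-(Hᵀ)⁻¹) H⁻¹ 0 = 1 := by
    simp [fromBlocks_multiply, mul_nonsing_inv, (isUnit_iff_isUnit_det H).1 hH,
      fromBlocks_one]
  exact ⟨.of_mul_eq_one _ hinv, by simp [fromBlocks_transpose, fromBlocks_neg]⟩

theorem fromBlocks_diagonal_mem_nullPolarities_sq_of_intertwines {X Y G : Matrix n n R}
    (hX : IsUnit X) (hG : IsUnit G) (hXY : Y * G = G * Xᵀ) :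
    fromBlocks X 0 0 Y ∈ nullPolarities (n ⊕ n) R ^ 2 := by
  have hdet : IsUnit G.det := (isUnit_iff_isUnit_det G).1 hG
  have hY : Y = G * Xᵀ * G⁻¹ := by rw [← hXY, mul_nonsing_inv_cancel_right _ _ hdet]
  have hGt : Gᵀ * G⁻¹ᵀ = 1 := by
    rw [← transpose_mul, nonsing_inv_mul _ hdet, transpose_one]
  rw [sq]
  refine ⟨_, fromBlocks_antidiagonal_mem_nullPolarities (hX.mul ((isUnit_transpose G).2 hG)), _,
    fromBlocks_antidiagonal_mem_nullPolarities (isUnit_nonsing_inv_iff.2 hG).neg, ?_⟩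
  simp [fromBlocks_multiply, hY, Matrix.mul_assoc, hGt]

theorem one_mem_nullPolarities_sq :
    (1 : Matrix (n ⊕ n) (n ⊕ n) R) ∈ nullPolarities (n ⊕ n) R ^ 2 := by
  rw [← fromBlocks_one]
  exact fromBlocks_diagonal_mem_nullPolarities_sq_of_intertwines isUnit_one isUnit_one (by simp)

theorem nullPolarities_sq_subset_pow_six :
    nullPolarities (n ⊕ n) R ^ 2 ⊆ nullPolarities (n ⊕ n) R ^ 6 := by
  have h := Set.pow_subset_pow_right (m := 1) (n := 3) (one_mem_nullPolarities_sq (n := n) (R := R))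
    (by norm_num)
  rwa [← pow_mul, ← pow_mul] at h

theorem fromBlocks_one_smul_one_mem_nullPolarities_sq (hn : (nullPolarities n R).Nonempty) {a : R}
    (ha : IsUnit a) : fromBlocks 1 0 0 (a • 1) ∈ nullPolarities (n ⊕ n) R ^ 2 := by
  obtain ⟨J, hJ⟩ := hn
  have hJinv : J * J⁻¹ = 1 := mul_nonsing_inv _ ((isUnit_iff_isUnit_det J).1 hJ.1)
  rw [sq]
  refine ⟨_, fromBlocks_diagonal_mem_nullPolarities hJ (smul_mem_nullPolarities ha hJ), _,
    fromBlocks_diagonal_mem_nullPolarities (inv_mem_nullPolarities hJ) (inv_mem_nullPolarities hJ),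
    ?_⟩
  simp [fromBlocks_multiply, hJinv]

theorem fromBlocks_lower_mem_nullPolarities_sq (hn : (nullPolarities n R).Nonempty) {a : R}
    (ha : IsUnit a) (ha' : IsUnit (1 - a)) (X : Matrix n n R) :
    fromBlocks 1 0 X (a • 1) ∈ nullPolarities (n ⊕ n) R ^ 2 := by
  obtain ⟨c, hc⟩ := ha'.exists_left_inv
  have hinv (Z : Matrix n n R) : fromBlocks (1 : Matrix n n R) 0 Z (1 : Matrix n n R) *
      fromBlocks (1 : Matrix n n R) 0 (-Z) (1 : Matrix n n R) = 1 := by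
    simp [fromBlocks_multiply, fromBlocks_one]
  have hX : c • X - c • a • X = X := by
    rw [smul_smul, ← sub_smul, ← mul_one_sub, hc, one_smul]
  convert conj_mem_nullPolarities_sq (hinv (c • X)) (by simpa using hinv (-(c • X)))
    (fromBlocks_one_smul_one_mem_nullPolarities_sq hn ha) using 1
  simp [fromBlocks_multiply, ← sub_eq_add_neg, hX]

theorem fromBlocks_upper_mem_nullPolarities_sq (hn : (nullPolarities n R).Nonempty) {a : R}
    (ha : IsUnit a) (ha' : IsUnit (1 - a)) (X : Matrix n n R) :
    fromBlocks 1 X 0 (a • 1) ∈ nullPolarities (n ⊕ n) R ^ 2 := by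
  simpa [fromBlocks_transpose] using
    transpose_mem_nullPolarities_sq (fromBlocks_lower_mem_nullPolarities_sq hn ha ha' Xᵀ)

theorem fromBlocks_mem_nullPolarities_pow_six (hn : (nullPolarities n R).Nonempty) {a d : R}
    (ha : IsUnit a) (ha' : IsUnit (1 - a)) (hd : IsUnit d) (hd' : IsUnit (1 - d))
    {A B C D Y : Matrix n n R} (hA : IsUnit A) (hD : D - C * A⁻¹ * B = (a * d) • Y)
    (hY : fromBlocks A 0 0 Y ∈ nullPolarities (n ⊕ n) R ^ 2) :
    fromBlocks A B C D ∈ nullPolarities (n ⊕ n) R ^ 6 := by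
  have hdet : IsUnit A.det := (isUnit_iff_isUnit_det A).1 hA
  rw [show 6 = 2 + 2 + 2 from rfl, pow_add, pow_add]
  refine ⟨_, ⟨_, fromBlocks_lower_mem_nullPolarities_sq hn ha ha' (C * A⁻¹), _, hY, rfl⟩, _,
    fromBlocks_upper_mem_nullPolarities_sq hn hd hd' (A⁻¹ * B), ?_⟩
  simp only [fromBlocks_multiply]
  simp [hdet, ← Matrix.mul_assoc, smul_smul, mul_comm d a, ← hD]

theorem fromBlocks_mem_nullPolarities_pow_six_of_isSymm (hn : (nullPolarities n R).Nonempty)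
    (h2 : IsUnit (2 : R)) {A B C D : Matrix n n R} (hA : IsUnit A) (hsymm : A.IsSymm)
    (hD : D - C * A⁻¹ * B = A) : fromBlocks A B C D ∈ nullPolarities (n ⊕ n) R ^ 6 := by
  have h2' : IsUnit (1 - -1 : R) := by rwa [sub_neg_eq_add, one_add_one_eq_two]
  refine fromBlocks_mem_nullPolarities_pow_six hn isUnit_one.neg h2' isUnit_one.neg h2' (Y := A) hA
    (by simp [hD]) ?_
  exact fromBlocks_diagonal_mem_nullPolarities_sq_of_intertwines hA isUnit_one (by simp [hsymm.eq])

end Blocks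

section TwoByTwo

open scoped Pointwise

variable {K : Type*} [Field K]

theorem nullPolarities_fin_two_nonempty : (nullPolarities (Fin 2) K).Nonempty := by
  refine ⟨!![0, 1; -1, 0], (isUnit_iff_isUnit_det _).2 (by simp), ?_⟩
  ext i j
  fin_cases i <;> fin_cases j <;> simp

theorem exists_isUnit_mul_eq_mul_companion {X : Matrix (Fin 2) (Fin 2) K}
    (hX : ∀ c : K, X ≠ c • 1) :
    ∃ G : Matrix (Fin 2) (Fin 2) K, IsUnit G ∧ X * G = G * !![0, -X.det; 1, X.trace] := by
  obtain ⟨v, hv⟩ : ∃ v, LinearIndependent K ![v, X *ᵥ v] := by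
    by_contra! h
    obtain ⟨c, hc⟩ := LinearMap.exists_eq_smul_id_of_forall_notLinearIndependent
      (f := Matrix.toLin' X) h
    exact hX c (by simpa using congrArg LinearMap.toMatrix' hc)
  refine ⟨(!![v 0, v 1; (X *ᵥ v) 0, (X *ᵥ v) 1])ᵀ, ?_, ?_⟩
  · rw [isUnit_transpose, ← linearIndependent_rows_iff_isUnit]
    convert hv using 1
    ext i j
    fin_cases i <;> fin_cases j <;> rfl
  · ext i j
    fin_cases i <;> fin_cases j <;>
      simp only [mul_apply, mulVec, dotProduct, Fin.sum_univ_two, det_fin_two, trace_fin_two,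
        transpose_apply, of_apply, cons_val', cons_val_fin_one, cons_val_zero, cons_val_one,
        Fin.zero_eta, Fin.mk_one] <;>
      ring

theorem exists_isUnit_mul_eq_mul {X Y : Matrix (Fin 2) (Fin 2) K} (hX : ∀ c : K, X ≠ c • 1)
    (hY : ∀ c : K, Y ≠ c • 1) (htrace : Y.trace = X.trace) (hdet : Y.det = X.det) :
    ∃ G : Matrix (Fin 2) (Fin 2) K, IsUnit G ∧ Y * G = G * X := by
  obtain ⟨P, hP, hXP⟩ := exists_isUnit_mul_eq_mul_companion hX
  obtain ⟨Q, hQ, hYQ⟩ := exists_isUnit_mul_eq_mul_companion hY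
  have hPdet : IsUnit P.det := (isUnit_iff_isUnit_det P).1 hP
  rw [htrace, hdet] at hYQ
  refine ⟨Q * P⁻¹, hQ.mul (isUnit_nonsing_inv_iff.2 hP), ?_⟩
  calc Y * (Q * P⁻¹) = Q * !![0, -X.det; 1, X.trace] * P⁻¹ := by rw [← Matrix.mul_assoc, hYQ]
    _ = Q * (P⁻¹ * (P * !![0, -X.det; 1, X.trace])) * P⁻¹ := by
      rw [nonsing_inv_mul_cancel_left _ _ hPdet]
    _ = Q * P⁻¹ * X := by
      rw [← hXP, ← Matrix.mul_assoc, Matrix.mul_assoc (Q * P⁻¹),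
        mul_nonsing_inv_cancel_right _ _ hPdet]

theorem fromBlocks_diagonal_mem_nullPolarities_sq {X Y : Matrix (Fin 2) (Fin 2) K}
    (hXunit : IsUnit X) (hX : ∀ c : K, X ≠ c • 1) (hY : ∀ c : K, Y ≠ c • 1)
    (htrace : Y.trace = X.trace) (hdet : Y.det = X.det) :
    fromBlocks X 0 0 Y ∈ nullPolarities (Fin 2 ⊕ Fin 2) K ^ 2 := by
  have hXt (c : K) : Xᵀ ≠ c • 1 := fun h => hX c (by simpa using congrArg transpose h)
  obtain ⟨G, hG, hXY⟩ := exists_isUnit_mul_eq_mul hXt hY (by simpa) (by simpa)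
  exact fromBlocks_diagonal_mem_nullPolarities_sq_of_intertwines hXunit hG hXY

theorem ne_smul_one_of_trace_eq_zero [NeZero (2 : K)] {X : Matrix (Fin 2) (Fin 2) K}
    (hdet : X.det ≠ 0) (htrace : X.trace = 0) (c : K) : X ≠ c • 1 := by
  rintro rfl
  have hc : c = 0 := by
    simpa [← two_mul, NeZero.ne (2 : K), trace_fin_two] using htrace
  simp [hc] at hdet

theorem fromBlocks_mem_nullPolarities_pow_six_of_trace_eq_zero [NeZero (2 : K)]
    {A B C D : Matrix (Fin 2) (Fin 2) K} (hA : A.det ≠ 0) (hAtrace : A.trace = 0)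
    (hStrace : (D - C * A⁻¹ * B).trace = 0) (hdet : (fromBlocks A B C D).det ≠ 0)
    (hsq : IsSquare (fromBlocks A B C D).det) :
    fromBlocks A B C D ∈ nullPolarities (Fin 2 ⊕ Fin 2) K ^ 6 := by
  have hAunit : IsUnit A := (isUnit_iff_isUnit_det A).2 hA.isUnit
  set S := D - C * A⁻¹ * B with hS
  obtain ⟨δ, hδ⟩ := hsq
  have hSdet : A.det * S.det = δ * δ := by
    have := A.invertibleOfIsUnitDet hA.isUnit
    rw [← hδ, det_fromBlocks₁₁, invOf_eq_nonsing_inv]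
  have hδ0 : δ ≠ 0 := by rintro rfl; simp [hδ] at hdet
  have hSdet' : S.det = (δ / A.det) ^ 2 * A.det := by field_simp; linear_combination hSdet
  -- One of the two square roots of `(δ / det A) ^ 2` differs from `-1`, as the characteristic
  -- is not two.
  obtain ⟨r, hr, hr0, hrS⟩ : ∃ r : K, 1 - -r ≠ 0 ∧ r ≠ 0 ∧ S.det = r ^ 2 * A.det := by
    have hr0 : δ / A.det ≠ 0 := div_ne_zero hδ0 hA
    by_cases h : 1 - -(δ / A.det) = 0
    · refine ⟨-(δ / A.det), ?_, neg_ne_zero.2 hr0, by rw [neg_sq, hSdet']⟩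
      rw [show 1 - - -(δ / A.det) = 2 by linear_combination (-1 : K) * h]
      exact NeZero.ne 2
    · exact ⟨_, h, hr0, hSdet'⟩
  have hYdet : (r⁻¹ • S).det = A.det := by
    rw [det_smul, Fintype.card_fin, hrS]
    field_simp
  have hYtrace : (r⁻¹ • S).trace = 0 := by rw [trace_smul, hStrace, smul_zero]
  have hYns := ne_smul_one_of_trace_eq_zero (hYdet.trans_ne hA) hYtrace
  refine fromBlocks_mem_nullPolarities_pow_six nullPolarities_fin_two_nonempty
    (a := -1) (d := -r) (Y := r⁻¹ • S) ?_ ?_ ?_ hr.isUnit hAunit ?_ ?_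
  · exact isUnit_one.neg
  · rw [sub_neg_eq_add, one_add_one_eq_two]; exact (NeZero.ne (2 : K)).isUnit
  · exact hr0.isUnit.neg
  · simp [← hS, smul_smul, hr0]
  · exact fromBlocks_diagonal_mem_nullPolarities_sq hAunit
      (ne_smul_one_of_trace_eq_zero hA hAtrace) hYns (hYtrace.trans hAtrace.symm) hYdet

theorem fromBlocks_companion_mem_nullPolarities_pow_six [NeZero (2 : K)] {p : K} (hp : p ≠ 0)
    {B D : Matrix (Fin 2) (Fin 2) K} (hB : B 0 0 = p * D.trace)
    (hdet : (fromBlocks !![0, p; 1, 0] B !![0, 1; 0, 0] D).det ≠ 0)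
    (hsq : IsSquare (fromBlocks !![0, p; 1, 0] B !![0, 1; 0, 0] D).det) :
    fromBlocks !![0, p; 1, 0] B !![0, 1; 0, 0] D ∈ nullPolarities (Fin 2 ⊕ Fin 2) K ^ 6 := by
  have hinv : !![0, p; 1, 0]⁻¹ = !![0, 1; p⁻¹, 0] :=
    inv_eq_left_inv (by simp [hp, one_fin_two])
  refine fromBlocks_mem_nullPolarities_pow_six_of_trace_eq_zero (by simpa) (by simp) ?_ hdet hsq
  rw [hinv, trace_sub, sub_eq_zero, trace_fin_two (_ * B)]
  simp [mul_apply, Fin.sum_univ_two, hB, hp]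

end TwoByTwo

section LinearAlgebra

open Module Polynomial

theorem exists_basis_add_smul {ι R M : Type*} [CommRing R] [AddCommGroup M] [Module R M]
    (g : Basis ι R M) {c : ι → R} {i₀ : ι} (hc : c i₀ = 0) :
    ∃ b : Basis ι R M, ∀ i, b i = g i + c i • g i₀ :=
  ⟨g.map (LinearEquiv.transvection (f := g.constr R c) (v := g i₀) (by simp [hc])), fun i => by
    simp [LinearMap.transvection.apply]⟩

theorem exists_basis_coord_eq {ι R M : Type*} [CommRing R] [AddCommGroup M] [Module R M]
    (g : Basis ι R M) {φ : Dual R M} {i₀ : ι} (hφ : φ (g i₀) = 1) :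
    ∃ b : Basis ι R M,
      b i₀ = g i₀ ∧ (∀ i ≠ i₀, b i = g i - φ (g i) • g i₀) ∧ b.coord i₀ = φ := by
  classical
  obtain ⟨b, hb⟩ := exists_basis_add_smul g (c := fun i => if i = i₀ then 0 else -φ (g i))
    (if_pos rfl)
  have hb₀ : b i₀ = g i₀ := by simp [hb]
  have hbi (i : ι) (hi : i ≠ i₀) : b i = g i - φ (g i) • g i₀ := by
    simp [hb, hi, sub_eq_add_neg]
  refine ⟨b, hb₀, hbi, b.ext fun i => ?_⟩
  obtain rfl | hi := eq_or_ne i i₀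
  · rw [Basis.coord_apply, b.repr_self, Finsupp.single_eq_same, hb₀, hφ]
  · rw [Basis.coord_apply, b.repr_self, Finsupp.single_eq_of_ne hi.symm, hbi i hi]
    simp [hφ]

theorem toMatrix_eq_of_apply_eq_sum {ι R M : Type*} [Fintype ι] [DecidableEq ι] [CommRing R]
    [AddCommGroup M] [Module R M] {f : End R M} (b : Basis ι R M) {A : Matrix ι ι R}
    (h : ∀ j, f (b j) = ∑ i, A i j • b i) : LinearMap.toMatrix b b f = A := by
  rw [← LinearEquiv.eq_symm_apply, LinearMap.toMatrix_symm]
  exact b.ext fun j => by rw [h, toLin_self]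

variable {K V : Type*} [Field K] [AddCommGroup V] [Module K V] [FiniteDimensional K V]

theorem exists_forall_aeval_apply_eq_zero (f : End K V) :
    ∃ v, ∀ p : K[X], aeval f p v = 0 → aeval f p = 0 := by
  obtain ⟨x, hx⟩ := exists_ker_toSpanSingleton_eq_annihilator K[X] (AEval K V f)
  obtain ⟨v, rfl⟩ := (AEval.of K V f).surjective x
  refine ⟨v, fun p hp => ?_⟩
  rw [← RingHom.mem_ker, ← AEval.annihilator_eq_ker_aeval (M := V), ← hx, LinearMap.mem_ker,
    LinearMap.toSpanSingleton_apply, ← AEval.of_aeval_smul, End.smul_def, hp, map_zero]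

theorem exists_linearIndependent_pow_apply (f : End K V) :
    ∃ v, LinearIndependent K fun i : Fin (minpoly K f).natDegree => (f ^ (i : ℕ)) v := by
  obtain ⟨v, hv⟩ := exists_forall_aeval_apply_eq_zero f
  refine ⟨v, Fintype.linearIndependent_iff.2 fun c hc => ?_⟩
  refine Fintype.linearIndependent_iff.1 (linearIndependent_pow f) c ?_
  have hp : aeval f (∑ i, monomial i.1 (c i)) = ∑ i, c i • f ^ (i : ℕ) := by
    simp only [map_sum, aeval_monomial, Algebra.smul_def]
  rw [← hp]
  apply hv
  rw [hp]
  simpa [LinearMap.sum_apply] using hc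

theorem pow_natDegree_minpoly_eq (f : End K V) :
    f ^ (minpoly K f).natDegree =
      -∑ i ∈ Finset.range (minpoly K f).natDegree, (minpoly K f).coeff i • f ^ i := by
  have h := minpoly.aeval K f
  rw [(minpoly.monic (Algebra.IsIntegral.isIntegral f)).as_sum] at h
  simpa [Algebra.smul_def, add_eq_zero_iff_eq_neg] using h

theorem trace_eq_neg_nextCoeff_charpoly (f : End K V) :
    LinearMap.trace K V f = -f.charpoly.nextCoeff := by
  have b := Module.finBasis K V
  rw [LinearMap.trace_eq_matrix_trace K b, Matrix.trace_eq_neg_charpoly_nextCoeff,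
    LinearMap.charpoly_toMatrix]

theorem exists_trace_eq_det_eq_of_natDegree_minpoly (f : End K V)
    (h : (minpoly K f).natDegree + 1 = finrank K V) :
    ∃ a : K, LinearMap.trace K V f = -((minpoly K f).nextCoeff + a) ∧
      LinearMap.det f = (-1) ^ finrank K V * ((minpoly K f).coeff 0 * a) := by
  obtain ⟨q, hq⟩ := f.minpoly_dvd_charpoly
  have hm : (minpoly K f).Monic := minpoly.monic (Algebra.IsIntegral.isIntegral f)
  have hqm : q.Monic := hm.of_mul_monic_left (hq ▸ f.charpoly_monic)
  have hqdeg : q.natDegree = 1 := by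
    have := congrArg natDegree hq
    rw [hm.natDegree_mul hqm, f.charpoly_natDegree] at this
    lia
  refine ⟨q.coeff 0, ?_, ?_⟩
  · rw [trace_eq_neg_nextCoeff_charpoly, hq, hm.nextCoeff_mul hqm,
      nextCoeff_of_natDegree_pos (p := q) (by lia), hqdeg]
  · rw [LinearMap.det_eq_sign_charpoly_coeff, hq, mul_coeff_zero]

end LinearAlgebra

section FourDimensional

open Module
open scoped Pointwise

variable {K V : Type*} [Field K] [AddCommGroup V] [Module K V] {f : End K V}

theorem exists_basis_toMatrix_eq_of_dual (g : Basis (Fin 4) K V) (h₀ : f (g 0) = g 1)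
    (h₁ : f (g 1) = g 2) {φ : Dual K V} (hφ₀ : φ (g 0) = 1) (hφ₁ : φ (g 1) = 0)
    (hφ₃ : φ (f (g 2)) = φ (g 2) * LinearMap.trace K V f) :
    ∃ (b : Basis (Fin 2 ⊕ Fin 2) K V) (B D : Matrix (Fin 2) (Fin 2) K),
      LinearMap.toMatrix b b f = fromBlocks !![0, φ (g 2); 1, 0] B !![0, 1; 0, 0] D ∧
        B 0 0 = φ (g 2) * D.trace := by
  let e : Fin 4 ≃ Fin 2 ⊕ Fin 2 := (finSumFinEquiv (m := 2) (n := 2)).symm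
  have he₀ : g.reindex e (.inl 0) = g 0 := g.reindex_apply e _
  have he₁ : g.reindex e (.inl 1) = g 1 := g.reindex_apply e _
  have he₂ : g.reindex e (.inr 0) = g 2 := g.reindex_apply e _
  obtain ⟨b, hb₀, hb, hbφ⟩ :=
    exists_basis_coord_eq (g.reindex e) (φ := φ) (i₀ := .inl 0) (by rw [he₀, hφ₀])
  rw [he₀] at hb₀ hb
  have hb₁ : b (.inl 1) = g 1 := by rw [hb _ (by simp), he₁, hφ₁, zero_smul, sub_zero]
  have hb₂ : b (.inr 0) = g 2 - φ (g 2) • g 0 := by rw [hb _ (by simp), he₂]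
  have hf₀ : f (b (.inl 0)) = b (.inl 1) := by rw [hb₀, hb₁, h₀]
  have hf₁ : f (b (.inl 1)) = b (.inr 0) + φ (g 2) • b (.inl 0) := by
    rw [hb₀, hb₁, hb₂, h₁, sub_add_cancel]
  obtain ⟨A, B, C, D, hM⟩ : ∃ A B C D, LinearMap.toMatrix b b f = fromBlocks A B C D :=
    ⟨_, _, _, _, (fromBlocks_toBlocks _).symm⟩
  have hentry (i j) : fromBlocks A B C D i j = b.repr (f (b j)) i := by
    rw [← hM, LinearMap.toMatrix_apply]
  have hA : A = !![0, φ (g 2); 1, 0] := by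
    ext i j
    rw [← fromBlocks_apply₁₁ A B C D, hentry]
    fin_cases i <;> fin_cases j <;> simp [hf₀, hf₁]
  have hC : C = !![0, 1; 0, 0] := by
    ext i j
    rw [← fromBlocks_apply₂₁ A B C D, hentry]
    fin_cases i <;> fin_cases j <;> simp [hf₀, hf₁]
  have htrace : D.trace = LinearMap.trace K V f := by
    rw [LinearMap.trace_eq_matrix_trace K b, hM]
    simp [trace, hA]
  have hB : B 0 0 = φ (g 2) * D.trace := by
    rw [← fromBlocks_apply₁₂ A B C D, hentry, ← Basis.coord_apply, hbφ, hb₂, map_sub, map_smul,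
      map_sub, map_smul, h₀, hφ₁, hφ₃, smul_zero, sub_zero, htrace]
  exact ⟨b, B, D, by rw [hM, hA, hC], hB⟩

theorem exists_toMatrix_mem_pow_six_of_dual [NeZero (2 : K)] (hdet : LinearMap.det f ≠ 0)
    (hsq : IsSquare (LinearMap.det f)) (g : Basis (Fin 4) K V) (h₀ : f (g 0) = g 1)
    (h₁ : f (g 1) = g 2) {φ : Dual K V} (hφ₀ : φ (g 0) = 1) (hφ₁ : φ (g 1) = 0)
    (hφ₂ : φ (g 2) ≠ 0) (hφ₃ : φ (f (g 2)) = φ (g 2) * LinearMap.trace K V f) :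
    ∃ b : Basis (Fin 2 ⊕ Fin 2) K V,
      LinearMap.toMatrix b b f ∈ nullPolarities (Fin 2 ⊕ Fin 2) K ^ 6 := by
  obtain ⟨b, B, D, hM, hB⟩ := exists_basis_toMatrix_eq_of_dual g h₀ h₁ hφ₀ hφ₁ hφ₃
  rw [← LinearMap.det_toMatrix b, hM] at hdet hsq
  exact ⟨b, hM ▸ fromBlocks_companion_mem_nullPolarities_pow_six hφ₂ hB hdet hsq⟩

theorem exists_toMatrix_mem_pow_six_of_natDegree_minpoly_eq_four [NeZero (2 : K)]
    (hV : finrank K V = 4) (hf : (minpoly K f).natDegree = 4) (hdet : LinearMap.det f ≠ 0)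
    (hsq : IsSquare (LinearMap.det f)) :
    ∃ b : Basis (Fin 2 ⊕ Fin 2) K V,
      LinearMap.toMatrix b b f ∈ nullPolarities (Fin 2 ⊕ Fin 2) K ^ 6 := by
  have := FiniteDimensional.of_finrank_eq_succ hV
  obtain ⟨v, hv⟩ := exists_linearIndependent_pow_apply f
  rw [hf] at hv
  let g : Basis (Fin 4) K V := basisOfLinearIndependentOfCardEqFinrank hv (by simp [hV])
  have hg (i : Fin 4) : g i = (f ^ (i : ℕ)) v := by simp [g]
  have hsucc (i : Fin 3) : f (g i.castSucc) = g i.succ := by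
    simp [hg, pow_succ']
  let φ : Dual K V := g.constr K ![1, 0, 1, LinearMap.trace K V f]
  have hφ (i : Fin 4) : φ (g i) = ![1, 0, 1, LinearMap.trace K V f] i := g.constr_basis K _ i
  refine exists_toMatrix_mem_pow_six_of_dual hdet hsq g (hsucc 0) (hsucc 1) (hφ 0) (hφ 1) ?_ ?_
  · simp [hφ]
  · rw [show f (g 2) = g 3 from hsucc 2]
    simp [hφ]

theorem exists_basis_of_natDegree_minpoly_eq_three (hV : finrank K V = 4)
    (hf : (minpoly K f).natDegree = 3) :
    ∃ g : Basis (Fin 4) K V, f (g 0) = g 1 ∧ f (g 1) = g 2 ∧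
      f (g 2) = -((minpoly K f).coeff 0 • g 0 + (minpoly K f).coeff 1 • g 1 +
        (minpoly K f).coeff 2 • g 2) := by
  have := FiniteDimensional.of_finrank_eq_succ hV
  obtain ⟨v, hv⟩ := exists_linearIndependent_pow_apply f
  rw [hf] at hv
  obtain ⟨y, hy⟩ := exists_linearIndependent_snoc_of_lt_finrank hv (by lia)
  let g : Basis (Fin 4) K V := basisOfLinearIndependentOfCardEqFinrank hy (by simp [hV])
  have hg (i : Fin 3) : g i.castSucc = (f ^ (i : ℕ)) v := by simp [g]
  have hg₀ : g 0 = v := hg 0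
  have hg₁ : g 1 = f v := hg 1
  have hg₂ : g 2 = f (f v) := hg 2
  have h := congrArg (· v) (pow_natDegree_minpoly_eq f)
  refine ⟨g, by rw [hg₀, hg₁], by rw [hg₁, hg₂], ?_⟩
  simpa [hf, Finset.sum_range_succ, hg₀, hg₁, hg₂, pow_succ'] using h

theorem exists_toMatrix_mem_pow_six_of_natDegree_minpoly_eq_three [NeZero (2 : K)]
    (hV : finrank K V = 4) (hf : (minpoly K f).natDegree = 3) (hdet : LinearMap.det f ≠ 0)
    (hsq : IsSquare (LinearMap.det f)) :
    ∃ b : Basis (Fin 2 ⊕ Fin 2) K V,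
      LinearMap.toMatrix b b f ∈ nullPolarities (Fin 2 ⊕ Fin 2) K ^ 6 := by
  have := FiniteDimensional.of_finrank_eq_succ hV
  obtain ⟨g, hg₀, hg₁, hg₂⟩ := exists_basis_of_natDegree_minpoly_eq_three hV hf
  obtain ⟨a, htrace, hdeta⟩ := exists_trace_eq_det_eq_of_natDegree_minpoly f (by lia)
  obtain ⟨hc, ha⟩ := mul_ne_zero_iff.1 (right_ne_zero_of_mul (hdeta ▸ hdet))
  rw [Polynomial.nextCoeff_of_natDegree_pos (by lia), hf] at htrace
  -- `φ (g 2)` is the solution of the linear equation `φ (f (g 2)) = φ (g 2) * trace f`.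
  let φ : Dual K V := g.constr K ![1, 0, (minpoly K f).coeff 0 / a, 0]
  have hφ (i : Fin 4) : φ (g i) = ![1, 0, (minpoly K f).coeff 0 / a, 0] i := g.constr_basis K _ i
  refine exists_toMatrix_mem_pow_six_of_dual hdet hsq g hg₀ hg₁ (hφ 0) (hφ 1) ?_ ?_
  · simp [hφ, hc, ha]
  · simp only [hg₂, map_neg, map_add, map_smul, hφ, htrace]
    simp only [cons_val, smul_eq_mul, mul_one, mul_zero, add_zero]
    field_simp
    ring

theorem exists_toMatrix_mem_pow_six_of_apply_eq_smul (hV : finrank K V = 4) {c : K}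
    (hf : ∀ x, f x = c • x) (hdet : LinearMap.det f ≠ 0) :
    ∃ b : Basis (Fin 2 ⊕ Fin 2) K V,
      LinearMap.toMatrix b b f ∈ nullPolarities (Fin 2 ⊕ Fin 2) K ^ 6 := by
  have := FiniteDimensional.of_finrank_eq_succ hV
  let b : Basis (Fin 2 ⊕ Fin 2) K V :=
    (finBasisOfFinrankEq K V hV).reindex (finSumFinEquiv (m := 2) (n := 2)).symm
  have hM : LinearMap.toMatrix b b f = fromBlocks (c • 1) 0 0 (c • 1) := by
    refine toMatrix_eq_of_apply_eq_sum b fun j => ?_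
    rcases j with j | j <;> simp [hf, one_apply, -Basis.coe_reindex]
  have hunit : IsUnit (c • 1 : Matrix (Fin 2) (Fin 2) K) := by
    rw [← LinearMap.det_toMatrix b, hM, det_fromBlocks_zero₁₂] at hdet
    exact (isUnit_iff_isUnit_det _).2 (left_ne_zero_of_mul hdet).isUnit
  exact ⟨b, hM ▸ nullPolarities_sq_subset_pow_six
    (fromBlocks_diagonal_mem_nullPolarities_sq_of_intertwines hunit isUnit_one (by simp))⟩

theorem exists_toMatrix_mem_pow_six_of_invariant_planes (hV : finrank K V = 4) {x y : V} {a b : K}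
    (hdet : LinearMap.det f ≠ 0) (hf : ∀ x, f (f x) = a • x + b • f x)
    (hxy : LinearIndependent K (Sum.elim ![x, f x] ![y, f y])) :
    ∃ b : Basis (Fin 2 ⊕ Fin 2) K V,
      LinearMap.toMatrix b b f ∈ nullPolarities (Fin 2 ⊕ Fin 2) K ^ 6 := by
  let g : Basis (Fin 2 ⊕ Fin 2) K V := basisOfLinearIndependentOfCardEqFinrank hxy (by simp [hV])
  have hg (i) : g i = Sum.elim ![x, f x] ![y, f y] i := by simp [g]
  have hM : LinearMap.toMatrix g g f = fromBlocks !![0, a; 1, b] 0 0 !![0, a; 1, b] := by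
    refine toMatrix_eq_of_apply_eq_sum g fun j => ?_
    rcases j with j | j <;> fin_cases j <;> simp [hg, hf]
  have hunit : IsUnit !![0, a; 1, b] := by
    rw [← LinearMap.det_toMatrix g, hM, det_fromBlocks_zero₁₂] at hdet
    exact (isUnit_iff_isUnit_det _).2 (left_ne_zero_of_mul hdet).isUnit
  have hns (c : K) : !![0, a; 1, b] ≠ c • 1 := fun h => by
    simpa using congrFun (congrFun h 1) 0
  exact ⟨g, hM ▸ nullPolarities_sq_subset_pow_six
    (fromBlocks_diagonal_mem_nullPolarities_sq hunit hns hns rfl rfl)⟩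

theorem exists_basis_inl_inr_eq (hV : finrank K V = 4) {v w : V}
    (hvw : LinearIndependent K ![v, w]) :
    ∃ g : Basis (Fin 2 ⊕ Fin 2) K V, g (.inl 0) = v ∧ g (.inr 0) = w := by
  have := FiniteDimensional.of_finrank_eq_succ hV
  obtain ⟨y, hy⟩ := exists_linearIndependent_snoc_of_lt_finrank hvw (by lia)
  obtain ⟨z, hz⟩ := exists_linearIndependent_snoc_of_lt_finrank hy (by lia)
  let g : Basis (Fin 4) K V := basisOfLinearIndependentOfCardEqFinrank hz (by simp [hV])
  have hg : ⇑g = Fin.snoc (Fin.snoc ![v, w] y) z :=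
    coe_basisOfLinearIndependentOfCardEqFinrank hz (by simp [hV])
  let e : Fin 4 ≃ Fin 2 ⊕ Fin 2 := (Equiv.swap 1 2).trans (finSumFinEquiv (m := 2) (n := 2)).symm
  refine ⟨g.reindex e, ?_, ?_⟩
  · rw [g.reindex_apply, hg]; rfl
  · rw [g.reindex_apply, hg]; rfl

theorem exists_basis_toMatrix_eq_of_sub_smul_rank_one (hV : finrank K V = 4) {v : V} {c : K}
    (hv : LinearIndependent K ![v, f v])
    (hf : ∀ x, ∃ k : K, f x = c • x + k • (f v - c • v)) :
    ∃ k : K, ∀ ξ : K, ∃ b : Basis (Fin 2 ⊕ Fin 2) K V, LinearMap.toMatrix b b f =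
      fromBlocks !![ξ, 0; 0, c] !![(c + k - ξ) * ξ - k * c, 0; 0, 0]
        !![1, 0; 0, 0] !![c + k - ξ, 0; 0, c] := by
  obtain ⟨g, hgv, hgf⟩ := exists_basis_inl_inr_eq hV hv
  obtain ⟨k, hk⟩ := hf (f v)
  obtain ⟨p, hp⟩ := hf (g (.inl 1))
  obtain ⟨q, hq⟩ := hf (g (.inr 1))
  refine ⟨k, fun ξ => ?_⟩
  -- Both `g (.inl 1) - p • v` and `g (.inr 1) - q • v` are eigenvectors.
  obtain ⟨b, hb⟩ := exists_basis_add_smul g (c := Sum.elim ![0, -p] ![-ξ, -q]) (i₀ := .inl 0) rfl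
  refine ⟨b, toMatrix_eq_of_apply_eq_sum b fun j => ?_⟩
  rw [hb, map_add, map_smul, Fintype.sum_sum_type]
  rcases j with j | j <;> fin_cases j <;>
    simp only [hb, hgv, hgf, hk, hp, hq, Fin.sum_univ_two, Sum.elim_inl, Sum.elim_inr, of_apply,
      fromBlocks_apply₁₁, fromBlocks_apply₁₂, fromBlocks_apply₂₁, fromBlocks_apply₂₂, cons_val',
      cons_val_fin_one, cons_val_zero, cons_val_one, Fin.zero_eta, Fin.mk_one] <;>
    module

theorem schurComplement_diagonal_eq {c k ξ : K} (hc : c ≠ 0) (hξ : ξ ≠ 0) :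
    !![c + k - ξ, 0; 0, c] -
      !![1, 0; 0, 0] * !![ξ, 0; 0, c]⁻¹ * !![(c + k - ξ) * ξ - k * c, 0; 0, 0] =
        !![k * c / ξ, 0; 0, c] := by
  have hinv : !![ξ, 0; 0, c]⁻¹ = !![ξ⁻¹, 0; 0, c⁻¹] :=
    inv_eq_left_inv (by simp [hc, hξ, one_fin_two])
  have hentry : c + k - ξ - ξ⁻¹ * ((c + k - ξ) * ξ - k * c) = k * c / ξ := by
    field_simp
    ring
  ext i j
  fin_cases i <;> fin_cases j <;> simp [hinv, hentry]

theorem exists_toMatrix_mem_pow_six_of_sub_smul_rank_one [NeZero (2 : K)]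
    (hV : finrank K V = 4) {v : V} {c : K} (hdet : LinearMap.det f ≠ 0)
    (hsq : IsSquare (LinearMap.det f)) (hv : LinearIndependent K ![v, f v])
    (hf : ∀ x, ∃ k : K, f x = c • x + k • (f v - c • v)) :
    ∃ b : Basis (Fin 2 ⊕ Fin 2) K V,
      LinearMap.toMatrix b b f ∈ nullPolarities (Fin 2 ⊕ Fin 2) K ^ 6 := by
  obtain ⟨k, hk⟩ := exists_basis_toMatrix_eq_of_sub_smul_rank_one hV hv hf
  obtain ⟨b₁, hb₁⟩ := hk 1
  have hc : c ≠ 0 := by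
    rintro rfl
    refine hdet ?_
    rw [← LinearMap.det_toMatrix b₁, hb₁]
    exact det_eq_zero_of_column_eq_zero (.inl 1) (by simp)
  have hunit {ξ : K} (hξ : ξ ≠ 0) : IsUnit !![ξ, 0; 0, c] :=
    (isUnit_iff_isUnit_det _).2 (by simp [hc, hξ])
  have hdetk : LinearMap.det f = k * c * c ^ 2 := by
    have := (hunit one_ne_zero).invertible
    rw [← LinearMap.det_toMatrix b₁, hb₁, det_fromBlocks₁₁, invOf_eq_nonsing_inv,
      schurComplement_diagonal_eq hc one_ne_zero, det_fin_two_of, det_fin_two_of]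
    ring
  obtain ⟨δ, hδ⟩ := hsq
  have hξ : δ / c ≠ 0 := div_ne_zero (by rintro rfl; simp [hδ] at hdet) hc
  have hkc : k * c = (δ / c) ^ 2 := by
    field_simp
    linear_combination hδ - hdetk
  obtain ⟨b, hb⟩ := hk (δ / c)
  refine ⟨b, hb ▸ fromBlocks_mem_nullPolarities_pow_six_of_isSymm nullPolarities_fin_two_nonempty
    (NeZero.ne (2 : K)).isUnit (hunit hξ) (by ext i j; fin_cases i <;> fin_cases j <;> rfl) ?_⟩
  rw [schurComplement_diagonal_eq hc hξ, hkc, sq, mul_div_cancel_right₀ _ hξ]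

theorem exists_apply_eq_of_forall_sub_mem_span (hV : 2 < finrank K V) {v : V} {a b c : K}
    (hv : LinearIndependent K ![v, f v]) (hf : ∀ x, f (f x) = a • x + b • f x)
    (hc : ∀ x, f x - c • x ∈ Submodule.span K (Set.range ![v, f v])) (x : V) :
    ∃ k : K, f x = c • x + k • (f v - c • v) := by
  have := FiniteDimensional.of_finrank_pos (K := K) (V := V) (by lia)
  have hroot : c ^ 2 - a - b * c = 0 := by
    obtain ⟨z, hz⟩ := (Submodule.span K (Set.range ![v, f v])).exists_of_finrank_lt
      (by rwa [finrank_span_eq_card hv, Fintype.card_fin])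
    by_contra h
    refine hz _ h ?_
    convert add_mem (neg_mem (hc (f z))) (Submodule.smul_mem _ (b - c) (hc z)) using 1
    rw [hf]
    module
  obtain ⟨d, hd⟩ := (Submodule.mem_span_range_iff_exists_fun K).1 (hc x)
  have hx : f x = c • x + (d 0 • v + d 1 • f v) := by
    rw [Fin.sum_univ_two] at hd
    exact eq_add_of_sub_eq' hd.symm
  have hrel : (c * d 0 + d 1 * a - b * d 0) • v + (d 0 + c * d 1) • f v = 0 := by
    have h := hf x
    nth_rw 1 [hx] at h
    rw [map_add, map_add, map_smul, map_smul, map_smul, hf v] at h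
    linear_combination (norm := module) h - (c - b) • hx - congrArg (· • x) hroot
  have hd₀ : d 0 = -(c * d 1) :=
    eq_neg_of_add_eq_zero_left (LinearIndependent.pair_iff.1 hv _ _ hrel).2
  exact ⟨d 1, by rw [hx, hd₀]; module⟩

theorem exists_linearIndependent_or_forall_apply_eq (hV : 2 < finrank K V) {v : V} {a b : K}
    (hv : LinearIndependent K ![v, f v]) (hf : ∀ x, f (f x) = a • x + b • f x) :
    (∃ y, LinearIndependent K (Sum.elim ![v, f v] ![y, f y])) ∨
      ∃ c : K, ∀ x, ∃ k : K, f x = c • x + k • (f v - c • v) := by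
  let W := Submodule.span K (Set.range ![v, f v])
  have hvW : v ∈ W := Submodule.subset_span ⟨0, rfl⟩
  have hfvW : f v ∈ W := Submodule.subset_span ⟨1, rfl⟩
  have hW : W ≤ W.comap f := by
    rw [Submodule.span_le, Set.range_subset_iff, Fin.forall_fin_two]
    exact ⟨hfvW, show f (f v) ∈ W from hf v ▸ W.add_mem (W.smul_mem a hvW) (W.smul_mem b hfvW)⟩
  by_cases h : ∃ x, LinearIndependent K ![x, W.mapQ W f hW x]
  · obtain ⟨x, hx⟩ := h
    obtain ⟨y, rfl⟩ := W.mkQ_surjective x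
    refine .inl ⟨y, (linearIndependent_span hv).sumElim_of_quotient _ ?_⟩
    have hmk : W.mkQ ∘ ![y, f y] = ![W.mkQ y, W.mapQ W f hW (W.mkQ y)] := by
      ext i
      fin_cases i <;> rfl
    exact hmk ▸ hx
  · push Not at h
    obtain ⟨c, hc⟩ := LinearMap.exists_eq_smul_id_of_forall_notLinearIndependent h
    refine .inr ⟨c, exists_apply_eq_of_forall_sub_mem_span hV hv hf fun x => ?_⟩
    rw [← Submodule.Quotient.eq]
    exact LinearMap.congr_fun hc (W.mkQ x)

theorem exists_toMatrix_mem_pow_six_of_natDegree_minpoly_eq_two [NeZero (2 : K)]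
    (hV : finrank K V = 4) (hf : (minpoly K f).natDegree = 2) (hdet : LinearMap.det f ≠ 0)
    (hsq : IsSquare (LinearMap.det f)) :
    ∃ b : Basis (Fin 2 ⊕ Fin 2) K V,
      LinearMap.toMatrix b b f ∈ nullPolarities (Fin 2 ⊕ Fin 2) K ^ 6 := by
  have := FiniteDimensional.of_finrank_eq_succ hV
  obtain ⟨v, hv⟩ := exists_linearIndependent_pow_apply f
  rw [hf] at hv
  have hv : LinearIndependent K ![v, f v] := by
    convert hv using 1
    ext i
    fin_cases i <;> rfl
  have hff (x : V) : f (f x) = -(minpoly K f).coeff 0 • x + -(minpoly K f).coeff 1 • f x := by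
    have h := congrArg (· x) (pow_natDegree_minpoly_eq f)
    rw [hf] at h
    simpa [Finset.sum_range_succ, sq, add_comm] using h
  obtain ⟨y, hy⟩ | ⟨c, hc⟩ := exists_linearIndependent_or_forall_apply_eq (by lia) hv hff
  · exact exists_toMatrix_mem_pow_six_of_invariant_planes hV hdet hff hy
  · exact exists_toMatrix_mem_pow_six_of_sub_smul_rank_one hV hdet hsq hv hc

theorem exists_toMatrix_mem_pow_six [NeZero (2 : K)] (hV : finrank K V = 4)
    (hdet : LinearMap.det f ≠ 0) (hsq : IsSquare (LinearMap.det f)) :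
    ∃ b : Basis (Fin 2 ⊕ Fin 2) K V,
      LinearMap.toMatrix b b f ∈ nullPolarities (Fin 2 ⊕ Fin 2) K ^ 6 := by
  have := FiniteDimensional.of_finrank_eq_succ hV
  have := nontrivial_of_finrank_pos (R := K) (M := V) (by lia)
  have hpos : 0 < (minpoly K f).natDegree := minpoly.natDegree_pos (Algebra.IsIntegral.isIntegral f)
  have hle : (minpoly K f).natDegree ≤ 4 := by
    rw [← hV, ← f.charpoly_natDegree]
    exact Polynomial.natDegree_le_of_dvd f.minpoly_dvd_charpoly f.charpoly_monic.ne_zero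
  obtain h | h | h | h : (minpoly K f).natDegree = 1 ∨ (minpoly K f).natDegree = 2 ∨
      (minpoly K f).natDegree = 3 ∨ (minpoly K f).natDegree = 4 := by lia
  · obtain ⟨c, rfl⟩ := minpoly.natDegree_eq_one_iff.1 h
    exact exists_toMatrix_mem_pow_six_of_apply_eq_smul hV
      (fun x => algebraMap_end_apply K K V c x) hdet
  · exact exists_toMatrix_mem_pow_six_of_natDegree_minpoly_eq_two hV h hdet hsq
  · exact exists_toMatrix_mem_pow_six_of_natDegree_minpoly_eq_three hV h hdet hsq
  · exact exists_toMatrix_mem_pow_six_of_natDegree_minpoly_eq_four hV h hdet hsq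

end FourDimensional

theorem collineation_eq_product_of_nullPolarities_general {K : Type*} [Field K] [NeZero (2 : K)]
    (A : Matrix (Fin 4) (Fin 4) K) (hA : IsUnit A) (hsq : IsSquare A.det) :
    ∃ S : Fin 6 → Matrix (Fin 4) (Fin 4) K,
      (∀ i, IsUnit (S i) ∧ (S i)ᵀ = -(S i)) ∧ A = (List.ofFn S).prod := by
  have hdet : A.det ≠ 0 := ((isUnit_iff_isUnit_det A).1 hA).ne_zero
  rw [← LinearMap.det_toLin'] at hdet hsq
  obtain ⟨b, hb⟩ := exists_toMatrix_mem_pow_six (by simp) hdet hsq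
  have hmem := toMatrix_mem_nullPolarities_pow_of_basis (k := 3) b (Pi.basisFun K (Fin 4)) hb
  rw [LinearMap.toMatrix_eq_toMatrix', LinearMap.toMatrix'_toLin', Set.mem_pow] at hmem
  obtain ⟨S, hS⟩ := hmem
  exact ⟨fun i => S i, fun i => (S i).2, hS.symm⟩

theorem collineation_eq_product_of_nullPolarities (A : Matrix (Fin 4) (Fin 4) ℝ)
    (hA : IsUnit A) (hdet : 0 < A.det) :
    ∃ k : ℕ, Even k ∧ 2 ≤ k ∧ k ≤ 6 ∧
      ∃ S : Fin k → Matrix (Fin 4) (Fin 4) ℝ,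
        (∀ i, IsUnit (S i) ∧ (S i)ᵀ = -(S i)) ∧
        ∃ lam : ℝ, lam ≠ 0 ∧ A = lam • (List.ofFn S).prod := by
  obtain ⟨S, hS, hprod⟩ := collineation_eq_product_of_nullPolarities_general A hA
    (Real.isSquare_iff.2 hdet.le)
  exact ⟨6, by decide, by norm_num, le_rfl, S, hS, 1, one_ne_zero, by rwa [one_smul]⟩
end
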